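/- arXiv:1110.5038 — 7 statements merged into one kernel-verified Lean document; each statement's English description precedes it below -/
import Mathlib

section
/- For every integer N ≥ 2 and every nonzero matrix X ∈ M_{m×n}(ℤ/Nℤ) there exist invertible matrices Q ∈ GL(m, ℤ/Nℤ) and T ∈ GL(n, ℤ/Nℤ) such that QXT is diagonal (its (i,j)-entry is 0 whenever i ≠ j) and each diagonal entry divides the next, i.e., (QXT)_{i+1,i+1} lies in the ideal generated by (QXT)_{i,i} for all i < min(m,n). -/
open Matrix

/-- Matrix equivalence. -/
def MEqv {m n : ℕ} (A B : Matrix (Fin m) (Fin n) ℤ) : Prop :=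
  ∃ (Q : Matrix (Fin m) (Fin m) ℤ) (T : Matrix (Fin n) (Fin n) ℤ),
    IsUnit Q.det ∧ IsUnit T.det ∧ Q * A * T = B

theorem MEqv.refl {m n : ℕ} (A : Matrix (Fin m) (Fin n) ℤ) : MEqv A A :=
  ⟨1, 1, by simp, by simp, by simp⟩

theorem MEqv.left {m n : ℕ} {A B : Matrix (Fin m) (Fin n) ℤ} (h : MEqv A B)
    (P : Matrix (Fin m) (Fin m) ℤ) (hP : IsUnit P.det) : MEqv A (P * B) := by
  obtain ⟨Q, T, hQ, hT, rfl⟩ := h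
  exact ⟨P * Q, T, by rw [det_mul]; exact hP.mul hQ, hT, by simp only [Matrix.mul_assoc]⟩

theorem MEqv.right {m n : ℕ} {A B : Matrix (Fin m) (Fin n) ℤ} (h : MEqv A B)
    (P : Matrix (Fin n) (Fin n) ℤ) (hP : IsUnit P.det) : MEqv A (B * P) := by
  obtain ⟨Q, T, hQ, hT, rfl⟩ := h
  exact ⟨Q, T * P, hQ, by rw [det_mul]; exact hT.mul hP, by simp only [Matrix.mul_assoc]⟩

/-- The block matrix with rows `(1, 0)` and `(c, Q)`. -/
def bord {m : ℕ} (c : Fin m → ℤ) (Q : Matrix (Fin m) (Fin m) ℤ) :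
    Matrix (Fin (m + 1)) (Fin (m + 1)) ℤ :=
  Matrix.of (Fin.cons (Fin.cons 1 0) (fun i => Fin.cons (c i) (Q i)))

theorem bord_det {m : ℕ} (c : Fin m → ℤ) (Q : Matrix (Fin m) (Fin m) ℤ) :
    (bord c Q).det = Q.det := by
  rw [det_succ_row_zero, Fin.sum_univ_succ]
  simp [bord]
  congr 1

theorem bord_mul_zero {m n : ℕ} (c : Fin m → ℤ) (Q : Matrix (Fin m) (Fin m) ℤ)
    (B : Matrix (Fin (m + 1)) (Fin n) ℤ) (j : Fin n) : (bord c Q * B) 0 j = B 0 j := by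
  simp [bord, Matrix.mul_apply, Fin.sum_univ_succ]

theorem bord_mul_succ {m n : ℕ} (c : Fin m → ℤ) (Q : Matrix (Fin m) (Fin m) ℤ)
    (B : Matrix (Fin (m + 1)) (Fin n) ℤ) (i : Fin m) (j : Fin n) :
    (bord c Q * B) i.succ j = c i * B 0 j + ∑ k, Q i k * B k.succ j := by
  simp [bord, Matrix.mul_apply, Fin.sum_univ_succ]

theorem mul_bord_zero {m n : ℕ} (c : Fin n → ℤ) (Q : Matrix (Fin n) (Fin n) ℤ)
    (B : Matrix (Fin m) (Fin (n + 1)) ℤ) (i : Fin m) :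
    (B * (bord c Q)ᵀ) i 0 = B i 0 := by
  simp [bord, Matrix.mul_apply, Fin.sum_univ_succ]

theorem mul_bord_succ {m n : ℕ} (c : Fin n → ℤ) (Q : Matrix (Fin n) (Fin n) ℤ)
    (B : Matrix (Fin m) (Fin (n + 1)) ℤ) (i : Fin m) (j : Fin n) :
    (B * (bord c Q)ᵀ) i j.succ = B i 0 * c j + ∑ k, B i k.succ * Q j k := by
  simp [bord, Matrix.mul_apply, Fin.sum_univ_succ]

theorem emod_zero_of_min {a d : ℤ} (hd : d ≠ 0)
    (h : a % d ≠ 0 → d.natAbs ≤ (a % d).natAbs) : a % d = 0 := by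
  by_contra hne
  have h1 := h hne
  have h2 := Int.emod_nonneg a hd
  have h3 := Int.emod_lt_abs a hd
  rw [Int.abs_eq_natAbs] at h3
  omega

theorem smith_int : ∀ (m n : ℕ) (A : Matrix (Fin m) (Fin n) ℤ),
    ∃ B, MEqv A B ∧ (∀ (i : Fin m) (j : Fin n), (i : ℕ) ≠ (j : ℕ) → B i j = 0) ∧
      (∀ (i i' : Fin m) (j j' : Fin n), (i : ℕ) = j → (i' : ℕ) = j' → (i' : ℕ) = i + 1 →
        B i j ∣ B i' j') := by
  intro m
  induction m with
  | zero => intro n A; exact ⟨A, MEqv.refl A, fun i => i.elim0, fun i => i.elim0⟩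
  | succ m ih =>
    intro n A
    cases n with
    | zero => exact ⟨A, MEqv.refl A, fun _ j => j.elim0, fun _ _ j => j.elim0⟩
    | succ n =>
    by_cases hA : A = 0
    · subst hA
      exact ⟨0, MEqv.refl 0, by simp, by simp⟩
    -- minimal nonzero entry
    have hex : ∃ k : ℕ, ∃ B, MEqv A B ∧ ∃ i j, B i j ≠ 0 ∧ (B i j).natAbs = k := by
      by_contra hcon
      apply hA
      ext i j
      by_contra hij
      exact hcon ⟨_, A, MEqv.refl A, i, j, hij, rfl⟩
    classical
    obtain ⟨B', hB', i0, j0, hne, hk⟩ := Nat.find_spec hex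
    have hmin' : ∀ B, MEqv A B → ∀ i j, B i j ≠ 0 → (B' i0 j0).natAbs ≤ (B i j).natAbs := by
      intro B hB i j hij
      rw [hk]
      exact Nat.find_min' hex ⟨B, hB, i, j, hij, rfl⟩
    generalize hd : B' i0 j0 = d at hne hmin'
    clear hk
    obtain ⟨B, hB, hB0⟩ : ∃ B, MEqv A B ∧ B 0 0 = d := by
      refine ⟨_, (hB'.left ((Equiv.swap 0 i0).permMatrix ℤ) ?_).right
        ((Equiv.swap 0 j0).permMatrix ℤ) ?_, ?_⟩
      · rw [det_permutation]; exact Units.isUnit _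
      · rw [det_permutation]; exact Units.isUnit _
      · simp only [Equiv.Perm.permMatrix, PEquiv.toMatrix_toPEquiv_mul, PEquiv.mul_toMatrix_toPEquiv]
        simp [Matrix.submatrix_apply, hd]
    have key : ∀ B, MEqv A B → B 0 0 = d → ∀ j : Fin n, B 0 j.succ % d = 0 := by
      intro B hB h0 j
      apply emod_zero_of_min hne
      have := hmin' _ (hB.right (bord (fun j => -(B 0 j.succ / d)) 1)ᵀ
        (by rw [det_transpose, bord_det]; simp)) 0 j.succ
      rw [mul_bord_succ] at this
      have e : B 0 0 * -(B 0 j.succ / d) + ∑ k : Fin n, B 0 k.succ * (1 : Matrix (Fin n) (Fin n) ℤ) j k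
          = B 0 j.succ % d := by
        simp [Matrix.one_apply, h0, Int.emod_def]; ring
      rwa [e] at this
    -- clear column
    obtain ⟨B1, hB1, h10, h1c⟩ : ∃ B1, MEqv A B1 ∧ B1 0 0 = d ∧ ∀ i : Fin m, B1 i.succ 0 = 0 := by
      refine ⟨_, hB.left (bord (fun i => -(B i.succ 0 / d)) 1) (by rw [bord_det]; simp), ?_, ?_⟩
      · rw [bord_mul_zero, hB0]
      · intro i
        have := hmin' _ (hB.left (bord (fun i => -(B i.succ 0 / d)) 1) (by rw [bord_det]; simp))
          i.succ 0
        rw [bord_mul_succ] at this ⊢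
        have e : -(B i.succ 0 / d) * B 0 0 + ∑ k : Fin m, (1 : Matrix (Fin m) (Fin m) ℤ) i k * B k.succ 0
            = B i.succ 0 % d := by
          simp [Matrix.one_apply, hB0, Int.emod_def]; ring
        rw [e] at this ⊢
        exact emod_zero_of_min hne this
    obtain ⟨B2, hB2, h20, h2c, h2r⟩ : ∃ B2, MEqv A B2 ∧ B2 0 0 = d ∧
        (∀ i : Fin m, B2 i.succ 0 = 0) ∧ (∀ j : Fin n, B2 0 j.succ = 0) := by
      refine ⟨_, hB1.right (bord (fun j => -(B1 0 j.succ / d)) 1)ᵀ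
        (by rw [det_transpose, bord_det]; simp), ?_, ?_, ?_⟩
      · rw [mul_bord_zero, h10]
      · intro i; rw [mul_bord_zero, h1c]
      · intro j
        rw [mul_bord_succ]
        have := key B1 hB1 h10 j
        have h3 := Int.emod_def (B1 0 j.succ) d
        simp [Matrix.one_apply, h10]
        linarith
    have hdvd : ∀ i j, d ∣ B2.submatrix Fin.succ Fin.succ i j := by
      intro i j
      have hU : ∀ j, ((bord (Pi.single i 1) 1)ᵀ * B2) 0 j = B2 0 j + B2 i.succ j := by
        intro j
        simp [bord, Matrix.mul_apply, Fin.sum_univ_succ, Pi.single_apply]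
      have := key _ (hB2.left (bord (Pi.single i 1) 1)ᵀ
        (by rw [det_transpose, bord_det]; simp)) (by rw [hU, h20, h2c, add_zero]) j
      rw [hU, h2r, zero_add] at this
      exact Int.dvd_of_emod_eq_zero this
    obtain ⟨D, ⟨Q, T, hQ, hT, hD⟩, hdiag, hchain⟩ := ih n (B2.submatrix Fin.succ Fin.succ)
    have hdD : ∀ i j, d ∣ D i j := by
      intro i j
      rw [← hD, Matrix.mul_apply]
      refine Finset.dvd_sum fun k _ => Dvd.dvd.mul_right ?_ _
      rw [Matrix.mul_apply]
      exact Finset.dvd_sum fun l _ => Dvd.dvd.mul_left (hdvd _ _) _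
    let F := bord 0 Q * B2 * (bord 0 Tᵀ)ᵀ
    have hF : MEqv A F := (hB2.left (bord 0 Q) (by rwa [bord_det])).right (bord 0 Tᵀ)ᵀ
      (by rwa [det_transpose, bord_det, det_transpose])
    have F00 : F 0 0 = d := by
      simp only [F]; rw [mul_bord_zero, bord_mul_zero, h20]
    have F0s : ∀ j : Fin n, F 0 j.succ = 0 := by
      intro j
      simp only [F]; rw [mul_bord_succ]; simp [bord_mul_zero, h2r]
    have Fs0 : ∀ i : Fin m, F i.succ 0 = 0 := by
      intro i
      simp only [F]; rw [mul_bord_zero, bord_mul_succ]; simp [h2c]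
    have Fss : ∀ (i : Fin m) (j : Fin n), F i.succ j.succ = D i j := by
      intro i j
      simp only [F]; rw [mul_bord_succ, ← hD, Matrix.mul_apply]
      simp only [bord_mul_succ]
      simp [Matrix.mul_apply]
    refine ⟨F, hF, ?_, ?_⟩
    · intro i j
      refine Fin.cases ?_ (fun i => ?_) i <;> refine Fin.cases ?_ (fun j => ?_) j
      · simp
      · intro _; exact F0s j
      · intro _; exact Fs0 i
      · intro h; rw [Fss]; exact hdiag i j (by simpa using h)
    · intro i i' j j' h1 h2 h3
      obtain ⟨i', rfl⟩ := Fin.exists_succ_eq.mpr (show i' ≠ 0 by rintro rfl; simp at h3)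
      obtain ⟨j', rfl⟩ := Fin.exists_succ_eq.mpr (show j' ≠ 0 by rintro rfl; simp at h2)
      rw [Fss]
      by_cases hi : i = 0
      · subst hi
        obtain rfl : j = 0 := Fin.ext h1.symm
        rw [F00]; exact hdD _ _
      · obtain ⟨i, rfl⟩ := Fin.exists_succ_eq.mpr hi
        obtain ⟨j, rfl⟩ := Fin.exists_succ_eq.mpr (show j ≠ 0 by rintro rfl; simp at h1)
        rw [Fss]
        simp only [Fin.val_succ] at h1 h2 h3
        exact hchain _ _ _ _ (by omega) (by omega) (by omega)

/-- For every integer `N ≥ 2` and every nonzero matrix `X ∈ M_{m×n}(ℤ/N)`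
there exist invertible matrices `Q ∈ GL(m, ℤ/N)` and `T ∈ GL(n, ℤ/N)` such
that `QXT` is diagonal (its `(i,j)`-entry is `0` whenever `i ≠ j`) and each
diagonal entry divides the next. -/
theorem exists_mul_mul_diagonal_dvd {N m n : ℕ} (hN : 2 ≤ N)
    (X : Matrix (Fin m) (Fin n) (ZMod N)) (hX : X ≠ 0) :
    ∃ (Q : Matrix (Fin m) (Fin m) (ZMod N))
      (T : Matrix (Fin n) (Fin n) (ZMod N)),
      IsUnit Q.det ∧ IsUnit T.det ∧
      (∀ (i : Fin m) (j : Fin n), (i : ℕ) ≠ (j : ℕ) → (Q * X * T) i j = 0) ∧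
      (∀ i : ℕ, (h : i + 1 < min m n) →
        (Q * X * T) ⟨i, by omega⟩ ⟨i, by omega⟩ ∣
          (Q * X * T) ⟨i + 1, by omega⟩ ⟨i + 1, by omega⟩) := by
  obtain ⟨B, ⟨Q, T, hQ, hT, hB⟩, h1, h2⟩ := smith_int m n (X.map (fun x => (x.cast : ℤ)))
  let f := Int.castRingHom (ZMod N)
  have hXX : (X.map (fun x => (x.cast : ℤ))).map f = X := by
    ext i j; simp [f]
  have e : Q.map f * X * T.map f = B.map f := by
    rw [← hB, Matrix.map_mul, Matrix.map_mul, hXX]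
  refine ⟨Q.map f, T.map f, ?_, ?_, ?_, ?_⟩
  · have := hQ.map f
    rwa [RingHom.map_det] at this
  · have := hT.map f
    rwa [RingHom.map_det] at this
  · intro i j hij
    rw [e, Matrix.map_apply, h1 i j hij, map_zero]
  · intro i h
    rw [e, Matrix.map_apply, Matrix.map_apply]
    exact map_dvd f (h2 _ _ _ _ rfl rfl rfl)
end

section
/- Let 0 ≤ s_1 ≤ ... ≤ s_t ≤ k be integers, and let H = { w ∈ (ℤ/p^kℤ)^t : p^{k-s_i} divides w_i for all i }. For any matrix M ∈ M_t(ℤ/p^kℤ), one has wM ∈ H for every w ∈ H if and only if for all indices i > j the entry M_{i,j} is divisible by p^{min(s_i - s_j, k)}, i.e., d_p(M_{i,j}) ≥ s_i - s_j. -/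
open Matrix

theorem pow_dvd_cancel_aux {p k a b : ℕ} (hp : p.Prime) (hab : a ≤ b) (hbk : b ≤ k)
    (x : ZMod (p ^ k)) (h : (p : ZMod (p ^ k)) ^ b ∣ (p : ZMod (p ^ k)) ^ a * x) :
    (p : ZMod (p ^ k)) ^ (b - a) ∣ x := by
  obtain ⟨y, hy⟩ := h
  obtain ⟨n, rfl⟩ := ZMod.intCast_surjective x
  obtain ⟨m, rfl⟩ := ZMod.intCast_surjective y
  have h1 : (((p : ℤ) ^ b * m : ℤ) : ZMod (p ^ k)) = (((p : ℤ) ^ a * n : ℤ) : ZMod (p ^ k)) := by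
    push_cast
    exact hy.symm
  rw [ZMod.intCast_eq_intCast_iff_dvd_sub] at h1
  push_cast at h1
  have h2 : (p : ℤ) ^ b ∣ (p : ℤ) ^ a * n :=
    (dvd_sub_left (dvd_mul_right _ m)).1 ((pow_dvd_pow _ hbk).trans h1)
  have h0 : (p : ℤ) ^ a ≠ 0 := pow_ne_zero _ (by exact_mod_cast hp.ne_zero)
  have h3 : (p : ℤ) ^ (b - a) ∣ n := by
    rw [← Nat.add_sub_cancel' hab, pow_add] at h2
    exact (mul_dvd_mul_iff_left h0).1 h2
  obtain ⟨c, rfl⟩ := h3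
  exact ⟨(c : ZMod (p ^ k)), by push_cast; rfl⟩

/-- Let `0 ≤ s_1 ≤ ⋯ ≤ s_t ≤ k` be integers and
`H = { w ∈ (ℤ/p^k)^t : p^{k-s_i} ∣ w_i for all i }`.  For any matrix
`M ∈ M_t(ℤ/p^k)`, one has `wM ∈ H` for every `w ∈ H` if and only if for
all indices `i > j` the entry `M_{i,j}` is divisible by
`p^{min(s_i - s_j, k)}`, i.e. `d_p(M_{i,j}) ≥ s_i - s_j`. -/
theorem vecMul_mem_iff_dvd {p k t : ℕ} (hp : p.Prime) (hk : 1 ≤ k)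
    (s : Fin t → ℕ) (hmono : Monotone s) (hsk : ∀ i, s i ≤ k)
    (M : Matrix (Fin t) (Fin t) (ZMod (p ^ k))) :
    (∀ w ∈ {w : Fin t → ZMod (p ^ k) |
        ∀ i : Fin t, (p : ZMod (p ^ k)) ^ (k - s i) ∣ w i},
      w ᵥ* M ∈ {w : Fin t → ZMod (p ^ k) |
        ∀ i : Fin t, (p : ZMod (p ^ k)) ^ (k - s i) ∣ w i}) ↔
    ∀ i j : Fin t, (j : ℕ) < (i : ℕ) →
      (p : ZMod (p ^ k)) ^ min (s i - s j) k ∣ M i j := by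
  constructor
  · intro h i j hij
    have hs : s j ≤ s i := hmono (le_of_lt hij)
    have hi := hsk i
    have key := h (Pi.single i ((p : ZMod (p ^ k)) ^ (k - s i))) (by
      intro l
      by_cases hl : l = i
      · subst hl
        simp
      · simp [hl]) j
    rw [Matrix.single_vecMul] at key
    have := pow_dvd_cancel_aux (a := k - s i) (b := k - s j) hp (by omega) (by omega) (M i j) (by simpa using key)
    have e : min (s i - s j) k = k - s j - (k - s i) := by omega
    rwa [e]
  · intro h w hw j
    change _ ∣ ∑ i, w i * M i j
    refine Finset.dvd_sum fun i _ => ?_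
    have hwi := hw i
    have hi := hsk i
    by_cases hij : (j : ℕ) < (i : ℕ)
    · have hs : s j ≤ s i := hmono (le_of_lt hij)
      have h2 := mul_dvd_mul hwi (h i j hij)
      rw [← pow_add] at h2
      exact (pow_dvd_pow _ (by omega)).trans h2
    · have hs : s i ≤ s j := hmono (not_lt.1 hij)
      exact ((pow_dvd_pow _ (by omega)).trans hwi).mul_right _
end

section
/- Let 0 ≤ s_1 ≤ ... ≤ s_t ≤ k be integers, let H = { w ∈ (ℤ/p^kℤ)^t : p^{k-s_i} divides w_i for all i }, and let M ∈ GL(t, ℤ/p^kℤ) be invertible. Then { wM : w ∈ H } = H if and only if for all indices i > j one has d_p(M_{i,j}) ≥ s_i - s_j. -/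
open Matrix

theorem cancel_pow_dvd {p k a b : ℕ} (hp : p.Prime) (hab : a + b ≤ k) (x : ZMod (p ^ k))
    (h : (p : ZMod (p ^ k)) ^ (a + b) ∣ (p : ZMod (p ^ k)) ^ a * x) :
    (p : ZMod (p ^ k)) ^ b ∣ x := by
  have : NeZero (p ^ k) := ⟨pow_ne_zero _ hp.ne_zero⟩
  obtain ⟨n, rfl⟩ := ZMod.natCast_zmod_surjective x
  obtain ⟨c, hc⟩ := h
  obtain ⟨m, rfl⟩ := ZMod.natCast_zmod_surjective c
  have h1 : ((p ^ a * n : ℕ) : ZMod (p ^ k)) = ((p ^ (a + b) * m : ℕ) : ZMod (p ^ k)) := by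
    push_cast
    exact hc
  rw [ZMod.natCast_eq_natCast_iff] at h1
  have h2 : p ^ (a + b) ∣ p ^ a * n :=
    (h1.dvd_iff (pow_dvd_pow p hab)).2 (dvd_mul_right _ _)
  rw [pow_add] at h2
  have h3 := Nat.dvd_of_mul_dvd_mul_left (pow_pos hp.pos a) h2
  obtain ⟨q, rfl⟩ := h3
  exact ⟨(q : ZMod (p ^ k)), by push_cast; rfl⟩

/-- Let `0 ≤ s_1 ≤ ⋯ ≤ s_t ≤ k` be integers, let
`H = { w ∈ (ℤ/p^k)^t : p^{k-s_i} ∣ w_i for all i }`, and let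
`M ∈ GL(t, ℤ/p^k)` be invertible.  Then `{ wM : w ∈ H } = H` if and only
if for all indices `i > j` one has `d_p(M_{i,j}) ≥ s_i - s_j`, i.e.
`p^{s_i - s_j} ∣ M_{i,j}`. -/
theorem image_vecMul_eq_iff_dvd {p k t : ℕ} (hp : p.Prime) (hk : 1 ≤ k)
    (s : Fin t → ℕ) (hmono : Monotone s) (hsk : ∀ i, s i ≤ k)
    (M : Matrix (Fin t) (Fin t) (ZMod (p ^ k))) (hM : IsUnit M.det) :
    ((fun w : Fin t → ZMod (p ^ k) => w ᵥ* M) ''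
        {w : Fin t → ZMod (p ^ k) |
          ∀ i : Fin t, (p : ZMod (p ^ k)) ^ (k - s i) ∣ w i} =
      {w : Fin t → ZMod (p ^ k) |
        ∀ i : Fin t, (p : ZMod (p ^ k)) ^ (k - s i) ∣ w i}) ↔
    ∀ i j : Fin t, (j : ℕ) < (i : ℕ) →
      (p : ZMod (p ^ k)) ^ (s i - s j) ∣ M i j := by
  have : NeZero (p ^ k) := ⟨pow_ne_zero _ hp.ne_zero⟩
  constructor
  · intro h i j hij
    have hs : s j ≤ s i := hmono (le_of_lt hij)
    have hi := hsk i
    have hmem : (Pi.single i ((p : ZMod (p ^ k)) ^ (k - s i)) : Fin t → ZMod (p ^ k)) ∈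
        {w : Fin t → ZMod (p ^ k) | ∀ i : Fin t, (p : ZMod (p ^ k)) ^ (k - s i) ∣ w i} := by
      intro l
      by_cases hl : l = i
      · subst hl
        simp
      · simp [Pi.single_eq_of_ne hl]
    have h2 := h.subset (Set.mem_image_of_mem _ hmem)
    have h3 := h2 j
    have h4 : k - s j = (k - s i) + (s i - s j) := by omega
    simp only [Matrix.single_vecMul, h4] at h3
    exact cancel_pow_dvd (a := k - s i) hp (by omega) _ (by simpa using h3)
  · intro h
    have hinj : Function.Injective (fun w : Fin t → ZMod (p ^ k) => w ᵥ* M) :=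
      Matrix.vecMul_injective_of_isUnit ((Matrix.isUnit_iff_isUnit_det M).2 hM)
    refine Set.eq_of_subset_of_ncard_le ?_ (Set.ncard_image_of_injective _ hinj).ge
      (Set.toFinite _)
    rintro _ ⟨w, hw, rfl⟩ j
    change _ ∣ ∑ i, w i * M i j
    refine Finset.dvd_sum fun i _ => ?_
    have hi := hsk i
    rcases lt_or_ge (j : ℕ) (i : ℕ) with hij | hij
    · have hs : s j ≤ s i := hmono (le_of_lt hij)
      have h4 : k - s j = (k - s i) + (s i - s j) := by omega
      rw [h4, pow_add]
      exact mul_dvd_mul (hw i) (h i j hij)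
    · have hs : s i ≤ s j := hmono hij
      exact ((pow_dvd_pow _ (by omega)).trans (hw i)).mul_right _
end

section
/- Let B ∈ M_{t×a}(ℤ/p^kℤ), and choose Q ∈ GL(t, ℤ/p^kℤ) and T ∈ GL(a, ℤ/p^kℤ) such that B⁰ = QBT is in normal form with (B⁰)_{i,j} = δ_{i,j} p^{s_i}. Let S ∈ M_t(ℤ) be an integer matrix invertible over ℤ (det S = ±1), and denote by S̄ its reduction modulo p^k. Then Z(S̄B) = Z(B) if and only if d_p((Q S̄ Q^{-1})_{i,j}) ≥ s_i - s_j for all indices i > j. -/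
theorem zs_key {p k s : ℕ} (hp : p.Prime) (hs : s ≤ k) (x : ZMod (p ^ k)) :
    x * (p : ZMod (p ^ k)) ^ s = 0 ↔ (p : ZMod (p ^ k)) ^ (k - s) ∣ x := by
  have h0 : (p : ZMod (p ^ k)) ^ k = 0 := by
    have := ZMod.natCast_self (p ^ k)
    push_cast at this
    exact this
  constructor
  · intro h
    obtain ⟨n, rfl⟩ := ZMod.intCast_surjective x
    have h1 : ((n * (p : ℤ) ^ s : ℤ) : ZMod (p ^ k)) = 0 := by
      push_cast
      exact h
    rw [ZMod.intCast_zmod_eq_zero_iff_dvd] at h1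
    have h2 : (p : ℤ) ^ (k - s) * (p : ℤ) ^ s ∣ n * (p : ℤ) ^ s := by
      rw [← pow_add, Nat.sub_add_cancel hs]
      push_cast at h1
      exact h1
    have hp0 : (p : ℤ) ^ s ≠ 0 := pow_ne_zero _ (by exact_mod_cast hp.ne_zero)
    obtain ⟨c, rfl⟩ := (mul_dvd_mul_iff_right hp0).1 h2
    exact ⟨(c : ZMod (p ^ k)), by push_cast; rfl⟩
  · rintro ⟨c, rfl⟩
    rw [mul_right_comm, ← pow_add, Nat.sub_add_cancel hs, h0, zero_mul]

open Matrix

/-- Let `B ∈ M_{t×a}(ℤ/p^k)`, and choose `Q ∈ GL(t, ℤ/p^k)` and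
`T ∈ GL(a, ℤ/p^k)` such that `B⁰ = QBT` is in normal form with
`(B⁰)_{i,j} = δ_{i,j} p^{s_i}`.  Let `S ∈ M_t(ℤ)` with `det S = ±1`, and
let `S̄` be its reduction mod `p^k`.  Then `Z(S̄B) = Z(B)` if and only if
`d_p((Q S̄ Q⁻¹)_{i,j}) ≥ s_i - s_j` for all `i > j`. -/
theorem zeroSet_vecMul_eq_iff_dvd {p k t a : ℕ} (hp : p.Prime) (hk : 1 ≤ k)
    (B : Matrix (Fin t) (Fin a) (ZMod (p ^ k)))
    (Q : Matrix (Fin t) (Fin t) (ZMod (p ^ k)))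
    (T : Matrix (Fin a) (Fin a) (ZMod (p ^ k)))
    (hQ : IsUnit Q.det) (hT : IsUnit T.det)
    (s : Fin t → ℕ) (hmono : Monotone s) (hsk : ∀ i, s i ≤ k)
    (hl : ∃ l, l ≤ min t a ∧ ∀ i : Fin t, s i < k ↔ (i : ℕ) < l)
    (hB0 : ∀ (i : Fin t) (j : Fin a),
      (Q * B * T) i j = if (i : ℕ) = (j : ℕ)
        then (p : ZMod (p ^ k)) ^ s i else 0)
    (S : Matrix (Fin t) (Fin t) ℤ) (hS : S.det = 1 ∨ S.det = -1) :
    ({w : Fin t → ZMod (p ^ k) |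
        w ᵥ* (S.map (Int.cast : ℤ → ZMod (p ^ k)) * B) = 0} =
      {w : Fin t → ZMod (p ^ k) | w ᵥ* B = 0}) ↔
    ∀ i j : Fin t, (j : ℕ) < (i : ℕ) →
      (p : ZMod (p ^ k)) ^ (s i - s j) ∣
        (Q * S.map (Int.cast : ℤ → ZMod (p ^ k)) * Q⁻¹) i j := by
  haveI : NeZero (p ^ k) := ⟨pow_ne_zero _ hp.ne_zero⟩
  have h0 : (p : ZMod (p ^ k)) ^ k = 0 := by
    have := ZMod.natCast_self (p ^ k)
    push_cast at this
    exact this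
  set A := S.map (Int.cast : ℤ → ZMod (p ^ k)) with hA
  have hAdet : IsUnit A.det := by
    have : A.det = ((S.det : ℤ) : ZMod (p ^ k)) := by
      rw [Int.cast_det]
    rw [this]
    rcases hS with h | h <;> rw [h] <;> simp
  set M := Q * A * Q⁻¹ with hM
  have hQi : IsUnit Q⁻¹.det := Matrix.isUnit_nonsing_inv_det Q hQ
  have hMdet : IsUnit M.det := by
    rw [hM, Matrix.det_mul, Matrix.det_mul]
    exact (hQ.mul hAdet).mul hQi
  have hTinj : ∀ u : Fin a → ZMod (p ^ k), u ᵥ* T = 0 ↔ u = 0 := by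
    intro u
    constructor
    · intro h
      have := congrArg (· ᵥ* T⁻¹) h
      simpa [Matrix.vecMul_vecMul, Matrix.mul_nonsing_inv T hT] using this
    · rintro rfl
      simp
  -- description of the zero set in the coordinates of the normal form
  have hZ : ∀ v : Fin t → ZMod (p ^ k),
      (v ᵥ* Q) ᵥ* B = 0 ↔ ∀ i, v i * (p : ZMod (p ^ k)) ^ s i = 0 := by
    intro v
    rw [← hTinj, Matrix.vecMul_vecMul, Matrix.vecMul_vecMul, ← Matrix.mul_assoc]
    have hent : ∀ j : Fin a, (v ᵥ* (Q * B * T)) j =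
        ∑ i : Fin t, if (i : ℕ) = (j : ℕ) then v i * (p : ZMod (p ^ k)) ^ s i else 0 := by
      intro j
      simp only [Matrix.vecMul, dotProduct, hB0, mul_ite, mul_zero]
    constructor
    · intro h i
      obtain ⟨l, hla, hl⟩ := hl
      by_cases hi : s i < k
      · have hil := (hl i).1 hi
        have hia : (i : ℕ) < a := by omega
        have h1 := congrFun h ⟨i, hia⟩
        rw [hent, Finset.sum_eq_single i] at h1
        · simpa using h1
        · intro b _ hb
          rw [if_neg]
          exact fun h => hb (Fin.ext h)
        · simp
      · have : s i = k := le_antisymm (hsk i) (not_lt.1 hi)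
        rw [this, h0, mul_zero]
    · intro h
      funext j
      rw [hent]
      simp [h]
  have hQQ : Q * Q⁻¹ = 1 := Matrix.mul_nonsing_inv Q hQ
  have hQQ' : Q⁻¹ * Q = 1 := Matrix.nonsing_inv_mul Q hQ
  have hZS : ∀ v : Fin t → ZMod (p ^ k),
      (v ᵥ* Q) ᵥ* (A * B) = 0 ↔ ∀ i, (v ᵥ* M) i * (p : ZMod (p ^ k)) ^ s i = 0 := by
    intro v
    rw [← hZ, hM]
    simp only [Matrix.vecMul_vecMul, Matrix.mul_assoc]
    rw [← Matrix.mul_assoc Q⁻¹ Q B, hQQ', Matrix.one_mul]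
  let Z : Set (Fin t → ZMod (p ^ k)) := {v | ∀ i, v i * (p : ZMod (p ^ k)) ^ s i = 0}
  have hMinj : Function.Injective (fun v : Fin t → ZMod (p ^ k) => v ᵥ* M) := by
    intro u v h
    have := congrArg (· ᵥ* M⁻¹) h
    simpa [Matrix.vecMul_vecMul, Matrix.mul_nonsing_inv M hMdet] using this
  have step1 : ({w : Fin t → ZMod (p ^ k) | w ᵥ* (A * B) = 0} =
      {w : Fin t → ZMod (p ^ k) | w ᵥ* B = 0}) ↔ ∀ v ∈ Z, v ᵥ* M ∈ Z := by
    constructor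
    · intro h v hv
      have h1 : v ᵥ* Q ∈ {w : Fin t → ZMod (p ^ k) | w ᵥ* B = 0} := (hZ v).2 hv
      rw [← h] at h1
      exact (hZS v).1 h1
    · intro h
      have himg : (fun v : Fin t → ZMod (p ^ k) => v ᵥ* M) '' Z = Z := by
        apply Set.eq_of_subset_of_ncard_le
        · rintro _ ⟨v, hv, rfl⟩
          exact h v hv
        · rw [Set.ncard_image_of_injective _ hMinj]
        · exact Set.toFinite _
      ext w
      have hw : (w ᵥ* Q⁻¹) ᵥ* Q = w := by
        rw [Matrix.vecMul_vecMul, hQQ', Matrix.vecMul_one]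
      rw [Set.mem_setOf_eq, Set.mem_setOf_eq, ← hw, hZ, hZS]
      constructor
      · intro h1
        have h2 : (w ᵥ* Q⁻¹) ᵥ* M ∈ Z := h1
        rw [← himg] at h2
        obtain ⟨v, hv, hvw⟩ := h2
        rw [← hMinj hvw]
        exact hv
      · intro h1
        exact h _ h1
  rw [step1]
  constructor
  · intro h i j hji
    have hs : s j ≤ s i := hmono (Fin.le_def.2 hji.le)
    have hv : Pi.single i ((p : ZMod (p ^ k)) ^ (k - s i)) ∈ Z := by
      intro i'
      by_cases hi : i' = i
      · subst hi
        rw [Pi.single_eq_same, ← pow_add, Nat.sub_add_cancel (hsk _), h0]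
      · rw [Pi.single_eq_of_ne hi, zero_mul]
    have h1 := h _ hv j
    rw [Matrix.single_vecMul] at h1
    have hik := hsk i
    have h2 : M i j * (p : ZMod (p ^ k)) ^ (k - (s i - s j)) = 0 := by
      have e : k - (s i - s j) = (k - s i) + s j := by omega
      rw [e, pow_add, ← h1]
      simp [Matrix.row]
      ring
    rw [zs_key hp (by omega)] at h2
    have e : k - (k - (s i - s j)) = s i - s j := by omega
    rwa [e] at h2
  · intro h v hv j
    rw [Matrix.vecMul, dotProduct, Finset.sum_mul]
    apply Finset.sum_eq_zero
    intro i _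
    by_cases hij : (j : ℕ) < (i : ℕ)
    · obtain ⟨c, hc⟩ := h i j hij
      have hs : s j ≤ s i := hmono (Fin.le_def.2 hij.le)
      have hvi := hv i
      have e : s i = (s i - s j) + s j := by omega
      rw [e, pow_add] at hvi
      rw [hc]
      linear_combination c * hvi
    · have hs : s i ≤ s j := hmono (Fin.le_def.2 (not_lt.1 hij))
      have hvi := hv i
      have e : s j = s i + (s j - s i) := by omega
      rw [e, pow_add]
      linear_combination M i j * (p : ZMod (p ^ k)) ^ (s j - s i) * hvi
end

section
/- Let p_1,...,p_g be distinct primes, k_1,...,k_g ≥ 1, N = Π_{γ=1}^g p_γ^{k_γ}, and for each γ let ι_γ : ℤ/p_γ^{k_γ}ℤ → ℤ/Nℤ be the additive embedding sending x to the unique residue class modulo N congruent to x modulo p_γ^{k_γ} and congruent to 0 modulo p_δ^{k_δ} for all δ ≠ γ. Given matrices B_γ ∈ M_{t×a_γ}(ℤ/p_γ^{k_γ}ℤ), let B ∈ M_{t×(Σ_γ a_γ)}(ℤ/Nℤ) be the block matrix whose γ-th block of columns is the entrywise image ι_γ(B_γ). Then for any integer matrix S ∈ M_t(ℤ), Z(SB)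 = Z(B) in (ℤ/Nℤ)^t if and only if Z(SB_γ) = Z(B_γ) in (ℤ/p_γ^{k_γ}ℤ)^t for every γ ∈ {1,...,g}. -/
open Matrix

/-- Let `p_1, …, p_g` be distinct primes, `k_γ ≥ 1`, `N = ∏ p_γ^{k_γ}`, and
for each `γ` let `ι_γ : ℤ/p_γ^{k_γ} → ℤ/N` be the additive embedding
characterized by: `ι_γ x` is congruent to `x` mod `p_γ^{k_γ}` and congruent
to `0` mod `p_δ^{k_δ}` for all `δ ≠ γ`.  Given matrices
`B_γ ∈ M_{t×a_γ}(ℤ/p_γ^{k_γ})`, let `B` be the block matrix over `ℤ/N`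
whose `γ`-th block of columns is the entrywise image `ι_γ (B_γ)`.  Then for
any integer matrix `S ∈ M_t(ℤ)`, `Z(SB) = Z(B)` in `(ℤ/N)^t` if and only if
`Z(S B_γ) = Z(B_γ)` in `(ℤ/p_γ^{k_γ})^t` for every `γ`. -/
theorem zeroSet_blockMatrix_eq_iff {g t : ℕ} (p k : Fin g → ℕ)
    (hp : ∀ γ, (p γ).Prime) (hinj : Function.Injective p)
    (hk : ∀ γ, 1 ≤ k γ) (a : Fin g → ℕ)
    (B : (γ : Fin g) → Matrix (Fin t) (Fin (a γ)) (ZMod (p γ ^ k γ)))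
    (ι : (γ : Fin g) → ZMod (p γ ^ k γ) → ZMod (∏ γ, p γ ^ k γ))
    (hι : ∀ (γ : Fin g) (x : ZMod (p γ ^ k γ)),
      ZMod.castHom (Finset.dvd_prod_of_mem (fun γ => p γ ^ k γ)
          (Finset.mem_univ γ)) (ZMod (p γ ^ k γ)) (ι γ x) = x ∧
      ∀ δ : Fin g, δ ≠ γ →
        ZMod.castHom (Finset.dvd_prod_of_mem (fun γ => p γ ^ k γ)
          (Finset.mem_univ δ)) (ZMod (p δ ^ k δ)) (ι γ x) = 0)
    (Bbig : Matrix (Fin t) ((γ : Fin g) × Fin (a γ)) (ZMod (∏ γ, p γ ^ k γ)))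
    (hB : ∀ (i : Fin t) (γ : Fin g) (j : Fin (a γ)),
      Bbig i ⟨γ, j⟩ = ι γ (B γ i j))
    (S : Matrix (Fin t) (Fin t) ℤ) :
    ({w : Fin t → ZMod (∏ γ, p γ ^ k γ) |
        w ᵥ* (S.map Int.cast * Bbig) = 0} =
      {w : Fin t → ZMod (∏ γ, p γ ^ k γ) | w ᵥ* Bbig = 0}) ↔
    ∀ γ : Fin g,
      {w : Fin t → ZMod (p γ ^ k γ) | w ᵥ* (S.map Int.cast * B γ) = 0} =
        {w : Fin t → ZMod (p γ ^ k γ) | w ᵥ* B γ = 0} := by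
  classical
  set π : (γ : Fin g) → ZMod (∏ γ, p γ ^ k γ) →+* ZMod (p γ ^ k γ) := fun γ =>
    ZMod.castHom (Finset.dvd_prod_of_mem (fun γ => p γ ^ k γ)
          (Finset.mem_univ γ)) (ZMod (p γ ^ k γ)) with hπ
  have h1 : ∀ γ x, π γ (ι γ x) = x := fun γ x => (hι γ x).1
  have h2 : ∀ γ x δ, δ ≠ γ → π δ (ι γ x) = 0 := fun γ x => (hι γ x).2
  have hinjπ : ∀ x, (∀ γ, π γ x = 0) → x = 0 := by
    intro x hx
    obtain ⟨n, rfl⟩ := ZMod.intCast_surjective x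
    rw [CharP.intCast_eq_zero_iff _ (∏ γ, p γ ^ k γ)]
    rw [Nat.cast_prod]
    apply Fintype.prod_dvd_of_coprime
    · intro i j hij
      simp only [Function.onFun]
      rw [Nat.isCoprime_iff_coprime]
      exact Nat.Coprime.pow _ _ ((Nat.coprime_primes (hp i) (hp j)).2 (fun h => hij (hinj h)))
    · intro i
      have := hx i
      rw [map_intCast] at this
      exact (CharP.intCast_eq_zero_iff _ (p i ^ k i) n).1 this
  have key : ∀ w : Fin t → ZMod (∏ γ, p γ ^ k γ),
      w ᵥ* Bbig = 0 ↔ ∀ γ, (fun i => π γ (w i)) ᵥ* B γ = 0 := by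
    intro w
    have e : ∀ γ (j : Fin (a γ)),
        π γ ((w ᵥ* Bbig) ⟨γ, j⟩) = ((fun i => π γ (w i)) ᵥ* B γ) j := by
      intro γ j
      simp only [vecMul, dotProduct, map_sum, map_mul, hB, h1]
    constructor
    · intro h γ
      ext j
      rw [← e, h]
      simp
    · intro h
      ext ⟨γ, j⟩
      apply hinjπ
      intro δ
      by_cases hd : δ = γ
      · subst hd
        rw [e, h]
        rfl
      · simp only [vecMul, dotProduct, map_sum, map_mul, hB, h2 γ _ δ hd, mul_zero,
          Finset.sum_const_zero]
  have keyS : ∀ w : Fin t → ZMod (∏ γ, p γ ^ k γ),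
      w ᵥ* (S.map Int.cast * Bbig) = 0 ↔
        ∀ γ, (fun i => π γ (w i)) ᵥ* (S.map Int.cast * B γ) = 0 := by
    intro w
    have e1 : w ᵥ* (S.map Int.cast * Bbig) = (w ᵥ* S.map Int.cast) ᵥ* Bbig :=
      (vecMul_vecMul w (S.map Int.cast) Bbig).symm
    rw [e1, key]
    refine forall_congr' fun γ => ?_
    have e2 : (fun i => π γ (w i)) ᵥ* (S.map Int.cast * B γ) =
        ((fun i => π γ (w i)) ᵥ* S.map Int.cast) ᵥ* B γ :=
      (vecMul_vecMul _ (S.map Int.cast) (B γ)).symm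
    rw [e2]
    have : (fun i => π γ ((w ᵥ* S.map Int.cast) i)) =
        (fun i => π γ (w i)) ᵥ* S.map Int.cast := by
      ext i
      simp only [vecMul, dotProduct, map_sum, map_mul, Matrix.map_apply, map_intCast]
    rw [this]
  simp only [Set.ext_iff, Set.mem_ofPred_eq]
  constructor
  · intro h γ v
    have hv : (fun i => π γ (ι γ (v i))) = v := by
      ext i
      exact h1 γ _
    have h0 : ∀ δ, δ ≠ γ → (fun i => π δ (ι γ (v i))) = 0 := by
      intro δ hd
      ext i
      exact h2 γ _ δ hd
    have hw := h (fun i => ι γ (v i))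
    rw [key, keyS] at hw
    constructor
    · intro hv'
      have := hw.1 (fun δ => by
        by_cases hd : δ = γ
        · subst hd
          rw [hv]
          exact hv'
        · rw [h0 δ hd, zero_vecMul]) γ
      rwa [hv] at this
    · intro hv'
      have := hw.2 (fun δ => by
        by_cases hd : δ = γ
        · subst hd
          rw [hv]
          exact hv'
        · rw [h0 δ hd, zero_vecMul]) γ
      rwa [hv] at this
  · intro h w
    rw [key, keyS]
    exact forall_congr' fun γ => h γ _
end

section
/- Let p_1,...,p_g be distinct primes, k_1,...,k_g ≥ 1, N = Π_{γ=1}^g p_γ^{k_γ}, and B_γ ∈ M_{t×a_γ}(ℤ/p_γ^{k_γ}ℤ) for each γ; let B over ℤ/Nℤ be the block matrix whose γ-th block of columns is the image of B_γ under the additive embedding ι_γ : ℤ/p_γ^{k_γ}ℤ → ℤ/Nℤ (sending x to the unique class congruent to x mod p_γ^{k_γ} and 0 mod p_δ^{k_δ}, δ ≠ γ). For each γ choose Q_γ ∈ GL(t, ℤ/p_γ^{k_γ}ℤ) and T_γ ∈ GL(a_γ, ℤ/p_γ^{k_γ}ℤ) so that Q_γ B_γ T_γ is in normal form with diagonal entries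 p_γ^{s_{γ,i}}. Let S ∈ M_t(ℤ) with det S = ±1. Then Z(SB) = Z(B) in (ℤ/Nℤ)^t if and only if for every γ and all indices i > j one has d_{p_γ}((Q_γ S̄_γ Q_γ^{-1})_{i,j}) ≥ s_{γ,i} - s_{γ,j}, where S̄_γ is the reduction of S modulo p_γ^{k_γ}. -/
open Matrix

theorem aux_dvd {p k e : ℕ} (hp : p.Prime) (he : e ≤ k) (x : ZMod (p ^ k)) :
    (p : ZMod (p ^ k)) ^ (k - e) * x = 0 ↔ (p : ZMod (p ^ k)) ^ e ∣ x := by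
  have : NeZero (p ^ k) := ⟨pow_ne_zero _ hp.ne_zero⟩
  have hpk : (p : ZMod (p ^ k)) ^ k = 0 := by
    rw [← Nat.cast_pow]; exact ZMod.natCast_self _
  constructor
  · intro h
    have hx : ((x.val : ℕ) : ZMod (p ^ k)) = x := ZMod.natCast_zmod_val x
    rw [← hx, ← Nat.cast_pow, ← Nat.cast_mul, ZMod.natCast_eq_zero_iff] at h
    have h2 : p ^ (k - e) * p ^ e ∣ p ^ (k - e) * x.val := by
      rw [← pow_add, Nat.sub_add_cancel he]; exact h
    have h3 : p ^ e ∣ x.val := Nat.dvd_of_mul_dvd_mul_left (pow_pos hp.pos _) h2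
    rw [← hx, ← Nat.cast_pow]
    exact Nat.cast_dvd_cast h3
  · rintro ⟨y, rfl⟩
    rw [← mul_assoc, ← pow_add, Nat.sub_add_cancel he, hpk, zero_mul]

theorem aux_D {p k t a : ℕ} (B : Matrix (Fin t) (Fin a) (ZMod (p ^ k)))
    (Q : Matrix (Fin t) (Fin t) (ZMod (p ^ k)))
    (T : Matrix (Fin a) (Fin a) (ZMod (p ^ k)))
    (hT : IsUnit T.det)
    (s : Fin t → ℕ) (hsk : ∀ i, s i ≤ k)
    (hl : ∃ l, l ≤ min t a ∧ ∀ i : Fin t, s i < k ↔ (i : ℕ) < l)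
    (hB0 : ∀ (i : Fin t) (j : Fin a),
      (Q * B * T) i j = if (i : ℕ) = (j : ℕ) then (p : ZMod (p ^ k)) ^ s i else 0)
    (u : Fin t → ZMod (p ^ k)) :
    (u ᵥ* Q) ᵥ* B = 0 ↔ ∀ i, (p : ZMod (p ^ k)) ^ s i * u i = 0 := by
  have hpk : (p : ZMod (p ^ k)) ^ k = 0 := by
    rw [← Nat.cast_pow]; exact ZMod.natCast_self _
  have hTu : IsUnit T := (Matrix.isUnit_iff_isUnit_det T).2 hT
  have h1 : (u ᵥ* Q) ᵥ* B = 0 ↔ u ᵥ* (Q * B * T) = 0 := by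
    rw [← Matrix.vecMul_vecMul, ← Matrix.vecMul_vecMul]
    constructor
    · intro h; rw [h, Matrix.zero_vecMul]
    · intro h
      apply Matrix.vecMul_injective_of_isUnit hTu
      simpa using h
  rw [h1]
  obtain ⟨l, hl1, hl2⟩ := hl
  constructor
  · intro h i
    by_cases hi : s i < k
    · have hia : (i : ℕ) < a := lt_of_lt_of_le ((hl2 i).1 hi) (hl1.trans (min_le_right _ _))
      have := congrFun h ⟨i, hia⟩
      simp only [Matrix.vecMul, dotProduct, hB0, Pi.zero_apply] at this
      rw [Finset.sum_eq_single i] at this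
      · simpa [mul_comm] using this
      · intro b _ hb
        rw [if_neg (fun h => hb (Fin.ext h)), mul_zero]
      · simp
    · have : s i = k := le_antisymm (hsk i) (not_lt.1 hi)
      rw [this, hpk, zero_mul]
  · intro h
    ext j
    simp only [Matrix.vecMul, dotProduct, hB0, Pi.zero_apply]
    apply Finset.sum_eq_zero
    intro i _
    split_ifs
    · rw [mul_comm]; exact h i
    · simp

theorem aux_local {p k t a : ℕ} (hp : p.Prime) (B : Matrix (Fin t) (Fin a) (ZMod (p ^ k)))
    (Q : Matrix (Fin t) (Fin t) (ZMod (p ^ k)))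
    (T : Matrix (Fin a) (Fin a) (ZMod (p ^ k)))
    (hQ : IsUnit Q.det) (hT : IsUnit T.det)
    (s : Fin t → ℕ) (hmono : Monotone s) (hsk : ∀ i, s i ≤ k)
    (hl : ∃ l, l ≤ min t a ∧ ∀ i : Fin t, s i < k ↔ (i : ℕ) < l)
    (hB0 : ∀ (i : Fin t) (j : Fin a),
      (Q * B * T) i j = if (i : ℕ) = (j : ℕ) then (p : ZMod (p ^ k)) ^ s i else 0)
    (S : Matrix (Fin t) (Fin t) (ZMod (p ^ k))) (hS : IsUnit S.det) :
    (∀ w : Fin t → ZMod (p ^ k), (w ᵥ* S) ᵥ* B = 0 ↔ w ᵥ* B = 0) ↔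
      ∀ i j : Fin t, (j : ℕ) < (i : ℕ) →
        (p : ZMod (p ^ k)) ^ (s i - s j) ∣ (Q * S * Q⁻¹) i j := by
  have : NeZero (p ^ k) := ⟨pow_ne_zero _ hp.ne_zero⟩
  have hpk : (p : ZMod (p ^ k)) ^ k = 0 := by
    rw [← Nat.cast_pow]; exact ZMod.natCast_self _
  have key := aux_D B Q T hT s hsk hl hB0
  set M := Q * S * Q⁻¹ with hM
  have hMQ : M * Q = Q * S := by
    rw [hM, Matrix.mul_assoc, Matrix.nonsing_inv_mul _ hQ, Matrix.mul_one]
  have hMu : IsUnit M := by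
    rw [Matrix.isUnit_iff_isUnit_det, hM, Matrix.det_mul, Matrix.det_mul]
    exact (hQ.mul hS).mul (Matrix.isUnit_nonsing_inv_det _ hQ)
  let Z : Set (Fin t → ZMod (p ^ k)) := {u | ∀ i, (p : ZMod (p ^ k)) ^ s i * u i = 0}
  have step1 : (∀ w : Fin t → ZMod (p ^ k), (w ᵥ* S) ᵥ* B = 0 ↔ w ᵥ* B = 0) ↔
      ∀ u, u ᵥ* M ∈ Z ↔ u ∈ Z := by
    have e : ∀ u : Fin t → ZMod (p ^ k), (u ᵥ* Q) ᵥ* S = (u ᵥ* M) ᵥ* Q := by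
      intro u
      rw [Matrix.vecMul_vecMul, Matrix.vecMul_vecMul, hMQ]
    constructor
    · intro h u
      have := h (u ᵥ* Q)
      rw [e, key, key] at this
      exact this
    · intro h w
      have hw : w = (w ᵥ* Q⁻¹) ᵥ* Q := by
        rw [Matrix.vecMul_vecMul, Matrix.nonsing_inv_mul _ hQ, Matrix.vecMul_one]
      rw [hw, e, key, key]
      exact h _
  have step2 : (∀ u, u ᵥ* M ∈ Z ↔ u ∈ Z) ↔ ∀ u ∈ Z, u ᵥ* M ∈ Z := by
    constructor
    · intro h u hu; exact (h u).2 hu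
    · intro h u
      refine ⟨fun hu => ?_, h u⟩
      have hinjM := Matrix.vecMul_injective_of_isUnit hMu
      have hmaps : Set.MapsTo (fun v => v ᵥ* M) Z Z := h
      obtain ⟨v, hv, hvu⟩ := Set.surj_on_of_inj_on_of_ncard_le (s := Z) (t := Z)
        (fun v _ => v ᵥ* M) (fun v hv => hmaps hv) (fun _ _ _ _ h => hinjM h) le_rfl
        (Set.toFinite Z) _ hu
      rwa [hinjM hvu]
  rw [step1, step2]
  constructor
  · intro h i j hij
    have hs : s j ≤ s i := hmono (Fin.le_def.2 hij.le)
    have h1 := h (Pi.single i ((p : ZMod (p ^ k)) ^ (k - s i))) (by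
      intro i'
      by_cases hi : i' = i
      · subst hi
        rw [Pi.single_eq_same, ← pow_add, Nat.add_sub_cancel' (hsk i'), hpk]
      · rw [Pi.single_eq_of_ne hi, mul_zero]) j
    rw [Matrix.single_vecMul] at h1
    rw [← aux_dvd hp ((Nat.sub_le _ _).trans (hsk i))]
    have : k - (s i - s j) = s j + (k - s i) := by have := hsk i; omega
    rw [this, pow_add, mul_assoc]
    simpa using h1
  · intro h u hu j
    simp only [Matrix.vecMul, dotProduct, Finset.mul_sum]
    apply Finset.sum_eq_zero
    intro i _
    have hui := hu i
    by_cases hij : (j : ℕ) < (i : ℕ)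
    · obtain ⟨y, hy⟩ := h i j hij
      have hs : s j ≤ s i := hmono (Fin.le_def.2 hij.le)
      calc (p : ZMod (p ^ k)) ^ s j * (u i * M i j)
          = ((p : ZMod (p ^ k)) ^ (s j + (s i - s j)) * u i) * y := by rw [hy]; ring
        _ = 0 := by rw [Nat.add_sub_cancel' hs, hui, zero_mul]
    · have hs : s i ≤ s j := hmono (Fin.le_def.2 (not_lt.1 hij))
      calc (p : ZMod (p ^ k)) ^ s j * (u i * M i j)
          = (p : ZMod (p ^ k)) ^ (s j - s i) * ((p : ZMod (p ^ k)) ^ s i * u i) * M i j := by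
            rw [← mul_assoc _ _ (u i), ← pow_add, Nat.sub_add_cancel hs, mul_assoc]
        _ = 0 := by rw [hui]; ring

theorem aux_crt {g : ℕ} (p k : Fin g → ℕ)
    (hp : ∀ γ, (p γ).Prime) (hinj : Function.Injective p) (x : ZMod (∏ γ, p γ ^ k γ))
    (h : ∀ γ, ZMod.castHom (Finset.dvd_prod_of_mem (fun γ => p γ ^ k γ)
          (Finset.mem_univ γ)) (ZMod (p γ ^ k γ)) x = 0) : x = 0 := by
  obtain ⟨n, rfl⟩ := ZMod.intCast_surjective x
  rw [ZMod.intCast_zmod_eq_zero_iff_dvd]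
  push_cast
  apply Finset.prod_dvd_of_coprime
  · intro i _ j _ hij
    have : Nat.Coprime (p i ^ k i) (p j ^ k j) :=
      Nat.Coprime.pow _ _ ((Nat.coprime_primes (hp i) (hp j)).2 (fun h => hij (hinj h)))
    have := Nat.isCoprime_iff_coprime.2 this
    push_cast at this
    exact this
  · intro i _
    have := h i
    rw [map_intCast, ZMod.intCast_zmod_eq_zero_iff_dvd] at this
    push_cast at this
    exact this

/-- The criterion for lifting an automorphism to an `A`-covering for an
arbitrary finite abelian group `A` (Theorem 3.5 of the paper): with
`N = ∏ p_γ^{k_γ}`, `B` the block matrix over `ℤ/N` built from the `B_γ` via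
the additive embeddings `ι_γ`, and `Q_γ, T_γ` normalizing each `B_γ` to a
normal form with diagonal entries `p_γ^{s_{γ,i}}`, for `S ∈ M_t(ℤ)` with
`det S = ±1` one has `Z(SB) = Z(B)` iff for every `γ` and all `i > j`,
`d_{p_γ}((Q_γ S̄_γ Q_γ⁻¹)_{i,j}) ≥ s_{γ,i} - s_{γ,j}`. -/
theorem zeroSet_blockMatrix_eq_iff_dvd {g t : ℕ} (p k : Fin g → ℕ)
    (hp : ∀ γ, (p γ).Prime) (hinj : Function.Injective p)
    (hk : ∀ γ, 1 ≤ k γ) (a : Fin g → ℕ)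
    (B : (γ : Fin g) → Matrix (Fin t) (Fin (a γ)) (ZMod (p γ ^ k γ)))
    (ι : (γ : Fin g) → ZMod (p γ ^ k γ) → ZMod (∏ γ, p γ ^ k γ))
    (hι : ∀ (γ : Fin g) (x : ZMod (p γ ^ k γ)),
      ZMod.castHom (Finset.dvd_prod_of_mem (fun γ => p γ ^ k γ)
          (Finset.mem_univ γ)) (ZMod (p γ ^ k γ)) (ι γ x) = x ∧
      ∀ δ : Fin g, δ ≠ γ →
        ZMod.castHom (Finset.dvd_prod_of_mem (fun γ => p γ ^ k γ)
          (Finset.mem_univ δ)) (ZMod (p δ ^ k δ)) (ι γ x) = 0)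
    (Bbig : Matrix (Fin t) ((γ : Fin g) × Fin (a γ)) (ZMod (∏ γ, p γ ^ k γ)))
    (hB : ∀ (i : Fin t) (γ : Fin g) (j : Fin (a γ)),
      Bbig i ⟨γ, j⟩ = ι γ (B γ i j))
    (Q : (γ : Fin g) → Matrix (Fin t) (Fin t) (ZMod (p γ ^ k γ)))
    (T : (γ : Fin g) → Matrix (Fin (a γ)) (Fin (a γ)) (ZMod (p γ ^ k γ)))
    (hQ : ∀ γ, IsUnit (Q γ).det) (hT : ∀ γ, IsUnit (T γ).det)
    (s : (γ : Fin g) → Fin t → ℕ)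
    (hmono : ∀ γ, Monotone (s γ)) (hsk : ∀ γ i, s γ i ≤ k γ)
    (hl : ∀ γ, ∃ l, l ≤ min t (a γ) ∧ ∀ i : Fin t, s γ i < k γ ↔ (i : ℕ) < l)
    (hB0 : ∀ (γ : Fin g) (i : Fin t) (j : Fin (a γ)),
      (Q γ * B γ * T γ) i j = if (i : ℕ) = (j : ℕ)
        then (p γ : ZMod (p γ ^ k γ)) ^ s γ i else 0)
    (S : Matrix (Fin t) (Fin t) ℤ) (hS : S.det = 1 ∨ S.det = -1) :
    ({w : Fin t → ZMod (∏ γ, p γ ^ k γ) |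
        w ᵥ* (S.map Int.cast * Bbig) = 0} =
      {w : Fin t → ZMod (∏ γ, p γ ^ k γ) | w ᵥ* Bbig = 0}) ↔
    ∀ γ : Fin g, ∀ i j : Fin t, (j : ℕ) < (i : ℕ) →
      (p γ : ZMod (p γ ^ k γ)) ^ (s γ i - s γ j) ∣
        (Q γ * S.map (Int.cast : ℤ → ZMod (p γ ^ k γ)) * (Q γ)⁻¹) i j := by
  let c : ∀ γ : Fin g, ZMod (∏ γ, p γ ^ k γ) →+* ZMod (p γ ^ k γ) := fun γ =>
    ZMod.castHom (Finset.dvd_prod_of_mem (fun γ => p γ ^ k γ) (Finset.mem_univ γ)) _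
  have hc1 : ∀ γ x, c γ (ι γ x) = x := fun γ x => (hι γ x).1
  have hc2 : ∀ γ x δ, δ ≠ γ → c δ (ι γ x) = 0 := fun γ x δ h => (hι γ x).2 δ h
  have glob : ∀ w : Fin t → ZMod (∏ γ, p γ ^ k γ),
      w ᵥ* Bbig = 0 ↔ ∀ γ, (fun i => c γ (w i)) ᵥ* B γ = 0 := by
    intro w
    have e : ∀ γ (j : Fin (a γ)), c γ ((w ᵥ* Bbig) ⟨γ, j⟩) =
        ((fun i => c γ (w i)) ᵥ* B γ) j := by
      intro γ j
      simp only [Matrix.vecMul, dotProduct, map_sum, map_mul, hB, hc1]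
    constructor
    · intro h γ
      ext j
      rw [← e, h]
      simp
    · intro h
      ext ⟨γ, j⟩
      apply aux_crt p k hp hinj
      intro δ
      by_cases hδ : δ = γ
      · subst hδ
        change c δ _ = 0
        rw [e, h]; rfl
      · change c δ _ = 0
        simp only [Matrix.vecMul, dotProduct, map_sum, map_mul, hB, hc2 γ _ δ hδ, mul_zero,
          Finset.sum_const_zero]
  have cS : ∀ (w : Fin t → ZMod (∏ γ, p γ ^ k γ)) γ,
      (fun i => c γ ((w ᵥ* S.map Int.cast) i)) =
        (fun i => c γ (w i)) ᵥ* S.map (Int.cast : ℤ → ZMod (p γ ^ k γ)) := by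
    intro w γ
    ext j
    simp only [Matrix.vecMul, dotProduct, map_sum, map_mul, Matrix.map_apply, map_intCast]
  have loc := fun γ => aux_local (hp γ) (B γ) (Q γ) (T γ) (hQ γ) (hT γ) (s γ) (hmono γ) (hsk γ)
    (hl γ) (hB0 γ) (S.map (Int.cast : ℤ → ZMod (p γ ^ k γ))) (by
      have : (S.map (Int.cast : ℤ → ZMod (p γ ^ k γ))).det = ((S.det : ℤ) : ZMod (p γ ^ k γ)) :=
        ((Int.castRingHom (ZMod (p γ ^ k γ))).map_det S).symm
      rw [this]
      rcases hS with h | h <;> simp [h])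
  rw [← forall_congr' loc, Set.ext_iff]
  change (∀ w : Fin t → ZMod (∏ γ, p γ ^ k γ),
    w ᵥ* (@HMul.hMul _ _ _ Matrix.instHMulOfFintypeOfMulOfAddCommMonoid
      (S.map (Int.cast : ℤ → ZMod (∏ γ, p γ ^ k γ))) Bbig) = 0 ↔ w ᵥ* Bbig = 0) ↔ _
  simp only [← Matrix.vecMul_vecMul]
  constructor
  · intro h γ w
    have hw := h (fun i => ι γ (w i))
    rw [glob, glob] at hw
    simp only [cS] at hw
    have e1 : (fun i => c γ (ι γ (w i))) = w := by ext i; exact hc1 _ _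
    have e2 : ∀ δ, δ ≠ γ → (fun i => c δ (ι γ (w i))) = 0 := by
      intro δ hδ; ext i; exact hc2 _ _ _ hδ
    constructor
    · intro h1
      have := hw.1 (fun δ => by
        by_cases hδ : δ = γ
        · subst hδ; rw [e1]; exact h1
        · rw [e2 δ hδ]; simp) γ
      rwa [e1] at this
    · intro h1
      have := hw.2 (fun δ => by
        by_cases hδ : δ = γ
        · subst hδ; rw [e1]; exact h1
        · rw [e2 δ hδ]; simp) γ
      rwa [e1] at this
  · intro h w
    rw [glob, glob]
    simp only [cS]
    exact forall_congr' fun γ => h γ _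
end

section
/- Let B ∈ M_{6×3}(ℤ/4ℤ) have rows (2,2,1), (2,0,2), (2,2,2), (2,0,3), (2,2,0), (2,0,0), and let S₄ ∈ M_6(ℤ) be the permutation matrix with rows (0,0,0,1,0,0), (0,0,0,0,1,0), (0,0,0,0,0,1), (1,0,0,0,0,0), (0,1,0,0,0,0), (0,0,1,0,0,0). Then Z(S₄B) = Z(B) in (ℤ/4ℤ)^6. -/
open Matrix

/-- The automorphism α₄ of the Petersen graph in Example 4.2 lifts: Z(S₄B) = Z(B) in (ℤ/4)⁶. -/
theorem zeroSet_eq_example_alpha4 (B : Matrix (Fin 6) (Fin 3) (ZMod 4))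
    (hB : B = !![2,2,1; 2,0,2; 2,2,2; 2,0,3; 2,2,0; 2,0,0])
    (S : Matrix (Fin 6) (Fin 6) ℤ)
    (hS : S = !![0,0,0,1,0,0; 0,0,0,0,1,0; 0,0,0,0,0,1; 1,0,0,0,0,0; 0,1,0,0,0,0; 0,0,1,0,0,0]) :
    {w : Fin 6 → ZMod 4 | w ᵥ* (S.map (Int.cast : ℤ → ZMod 4) * B) = 0} =
      {w : Fin 6 → ZMod 4 | w ᵥ* B = 0} := by
  have h1 : S.map (Int.cast : ℤ → ZMod 4) * B = B * (!![1,1,1; 0,-1,0; 0,0,1] : Matrix (Fin 3) (Fin 3) (ZMod 4)) := by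
    subst hB hS
    decide
  have h2 : B = S.map (Int.cast : ℤ → ZMod 4) * B * (!![1,1,-1; 0,-1,0; 0,0,1] : Matrix (Fin 3) (Fin 3) (ZMod 4)) := by
    subst hB hS
    decide
  ext w
  simp only [Set.mem_ofPred_eq]
  constructor
  · intro h
    rw [h2, ← Matrix.vecMul_vecMul, h, Matrix.zero_vecMul]
  · intro h
    rw [h1, ← Matrix.vecMul_vecMul, h, Matrix.zero_vecMul]
end
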